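/- arXiv:2002.02430 — 6 statements merged into one kernel-verified Lean document; each statement's English description precedes it below -/
import Mathlib

section
/- Let I and T be nonempty finite sets, and let Ω be a finite set equipped with nonnegative weights w : Ω → ℝ summing to 1 (expectations E_ω denote w-weighted sums over Ω). Let r : I → ℝ and α : I → ℝ be nonnegative, let β > 0 be real, let ALG be a real number, let θ : I → ℝ be nonnegative, let λ : Ω × T → ℝ be nonnegative, and for each ω ∈ Ω let (P_i(ω))_{i∈I} be a family of pairwise disjoint finite subsets of T. Suppose (1) Σ_{i∈I} θ_i + Σ_{t∈T} E_ω[λ(ω,t)] ≤ β·ALG, and (2) for every i ∈ I, θ_i + E_ω[ Σ_{t∈P_i(ω)} λ(ω,t) ] ≥ α_i · r_i · E_ω[ |P_i(ω)| ]. Then ALG ≥ (min_{i∈I} α_i / β) · Σ_{i∈I} r_i · E_ω[ |P_i(ω)| ]. -/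
/-- **Generalized (LP-free) certificate of optimality** (Lemma `certificate`).
Given disjoint families `P ω i` of arrivals (for each sample path `ω`), nonnegative
variables `θ`, `λ` satisfying the budget constraint (1) and the per-resource
pseudo-reward constraints (2), the algorithm's reward `ALG` is at least
`(min_i α_i / β)` times the benchmark's expected reward. -/
theorem generalized_certificate
    {I T Ω : Type*} [Fintype I] [Fintype T] [Fintype Ω]
    [Nonempty I] [Nonempty T]
    (w : Ω → ℝ) (hw0 : ∀ ω, 0 ≤ w ω) (hw1 : ∑ ω, w ω = 1)
    (r : I → ℝ) (hr : ∀ i, 0 ≤ r i)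
    (α : I → ℝ) (hα : ∀ i, 0 ≤ α i)
    (β : ℝ) (hβ : 0 < β) (ALG : ℝ)
    (θ : I → ℝ) (hθ : ∀ i, 0 ≤ θ i)
    (lam : Ω → T → ℝ) (hlam : ∀ ω t, 0 ≤ lam ω t)
    (P : Ω → I → Finset T)
    (hdisj : ∀ ω, ∀ i j, i ≠ j → Disjoint (P ω i) (P ω j))
    (h1 : ∑ i, θ i + ∑ t, ∑ ω, w ω * lam ω t ≤ β * ALG)
    (h2 : ∀ i, θ i + ∑ ω, w ω * ∑ t ∈ P ω i, lam ω t
          ≥ α i * r i * ∑ ω, w ω * ((P ω i).card : ℝ)) :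
    ALG ≥ (Finset.univ.inf' Finset.univ_nonempty α / β)
          * ∑ i, r i * ∑ ω, w ω * ((P ω i).card : ℝ) := by
  classical
  have hN : ∀ i, 0 ≤ ∑ ω, w ω * ((P ω i).card : ℝ) := fun i =>
    Finset.sum_nonneg fun ω _ => mul_nonneg (hw0 ω) (Nat.cast_nonneg _)
  have key : ∀ ω, ∑ i, ∑ t ∈ P ω i, lam ω t ≤ ∑ t, lam ω t := by
    intro ω
    rw [← Finset.sum_biUnion (fun i _ j _ hij => hdisj ω i j hij)]
    exact Finset.sum_le_sum_of_subset_of_nonneg (Finset.subset_univ _)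
      (fun t _ _ => hlam ω t)
  have h3 : ∑ i, ∑ ω, w ω * ∑ t ∈ P ω i, lam ω t ≤ ∑ t, ∑ ω, w ω * lam ω t := by
    rw [Finset.sum_comm, Finset.sum_comm (s := (Finset.univ : Finset T))]
    refine Finset.sum_le_sum fun ω _ => ?_
    rw [← Finset.mul_sum, ← Finset.mul_sum]
    exact mul_le_mul_of_nonneg_left (key ω) (hw0 ω)
  have h4 : Finset.univ.inf' Finset.univ_nonempty α
      * ∑ i, r i * ∑ ω, w ω * ((P ω i).card : ℝ)
      ≤ ∑ i, (θ i + ∑ ω, w ω * ∑ t ∈ P ω i, lam ω t) := by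
    rw [Finset.mul_sum]
    refine Finset.sum_le_sum fun i _ => le_trans ?_ (h2 i)
    rw [mul_assoc]
    exact mul_le_mul_of_nonneg_right (Finset.inf'_le _ (Finset.mem_univ i))
      (mul_nonneg (hr i) (hN i))
  rw [Finset.sum_add_distrib] at h4
  rw [ge_iff_le, div_mul_eq_mul_div, div_le_iff₀ hβ]
  linarith
end

section
/- Let N be a finite type and let φ : Finset N → N → ℝ be a choice model satisfying 0 ≤ φ(A, i) ≤ 1 for all A and i, and the weak substitution property: for every finite set A ⊆ N, every i ∈ A, and every j ∉ A, φ(A ∪ {j}, i) ≤ φ(A, i). Let S ⊆ N be a finite set with m = |S|, and let p : N → ℝ be target probabilities satisfying 0 ≤ p_s ≤ φ(S, s) for every s ∈ S. Then there exist m assortments A_1, …, A_m with A_k ⊆ S for every k, and weights u_1, …, u_m ∈ [0, 1], such that Σ_{k=1}^{m} u_k ≤ 1 and, for every s ∈ S, Σ_{k : s ∈ A_k} u_k · φ(A_k, s) = p_s. -/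
open Finset

theorem probability_matching_aux
    {N : Type*} [DecidableEq N]
    (φ : Finset N → N → ℝ)
    (hφ0 : ∀ A i, 0 ≤ φ A i)
    (hsub : ∀ (A : Finset N) (i : N), i ∈ A → ∀ j ∉ A, φ (insert j A) i ≤ φ A i)
    (n : ℕ) : ∀ (S : Finset N) (p : N → ℝ) (c : ℝ), S.card = n → 0 ≤ c →
    (∀ s ∈ S, 0 ≤ p s) → (∀ s ∈ S, p s ≤ c * φ S s) →
    ∃ (A : Fin n → Finset N) (u : Fin n → ℝ),
      (∀ k, A k ⊆ S) ∧ (∀ k, 0 ≤ u k) ∧ (∑ k, u k ≤ c) ∧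
      (∀ s ∈ S, ∑ k, (if s ∈ A k then u k * φ (A k) s else 0) = p s) := by
  induction n with
  | zero =>
    intro S p c hS hc _ _
    have hS' : S = ∅ := Finset.card_eq_zero.mp hS
    subst hS'
    exact ⟨fun _ => ∅, fun _ => 0, by simp, by simp, by simpa using hc, by simp⟩
  | succ n ih =>
    intro S p c hS hc hp0 hp1
    have hr : ∀ s ∈ S, ∃ r, 0 ≤ r ∧ r ≤ c ∧ p s = r * φ S s := by
      intro s hs
      rcases (hφ0 S s).eq_or_lt with h | h
      · refine ⟨0, le_rfl, hc, ?_⟩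
        have h0 := hp0 s hs
        have h1 := hp1 s hs
        rw [← h] at h1 ⊢
        linarith
      · refine ⟨p s / φ S s, div_nonneg (hp0 s hs) h.le, ?_, ?_⟩
        · rw [div_le_iff₀ h]
          exact hp1 s hs
        · field_simp
    choose! r hr0 hrc hrp using hr
    have hne : S.Nonempty := Finset.card_pos.mp (by omega)
    obtain ⟨t, ht, hmin⟩ := Finset.exists_min_image S r hne
    have hins : insert t (S.erase t) = S := Finset.insert_erase ht
    obtain ⟨A, u, hA, hu, hsum, hm⟩ := ih (S.erase t) (fun s => p s - r t * φ S s) (c - r t)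
      (by rw [Finset.card_erase_of_mem ht]; omega) (by linarith [hrc t ht])
      (by
        intro s hs
        have hs' := Finset.mem_of_mem_erase hs
        have := mul_le_mul_of_nonneg_right (hmin s hs') (hφ0 S s)
        rw [hrp s hs']
        linarith)
      (by
        intro s hs
        have hs' := Finset.mem_of_mem_erase hs
        have h1 := hsub (S.erase t) s hs t (Finset.notMem_erase t S)
        rw [hins] at h1
        have h2 := mul_le_mul_of_nonneg_left h1 (sub_nonneg.mpr (hrc t ht))
        have h3 := hp1 s hs'
        linarith)
    refine ⟨Fin.cons S A, Fin.cons (r t) u, ?_, ?_, ?_, ?_⟩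
    · intro k
      refine Fin.cases ?_ (fun k => ?_) k
      · simp
      · simpa using (hA k).trans (Finset.erase_subset t S)
    · intro k
      refine Fin.cases ?_ (fun k => ?_) k
      · simpa using hr0 t ht
      · simpa using hu k
    · rw [Fin.sum_univ_succ]
      simp only [Fin.cons_zero, Fin.cons_succ]
      linarith
    · intro s hs
      rw [Fin.sum_univ_succ]
      simp only [Fin.cons_zero, Fin.cons_succ, if_pos hs]
      by_cases hst : s = t
      · subst hst
        rw [Finset.sum_eq_zero, add_zero, hrp s hs]
        intro k _
        exact if_neg fun h => Finset.notMem_erase s S (hA k h)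
      · rw [hm s (Finset.mem_erase.mpr ⟨hst, hs⟩)]
        ring

/-- **Probability Matching** (Lemma `probmatch`). Given a choice model `φ` with values
in `[0,1]` satisfying weak substitution, a finite set `S` and target probabilities
`p s ≤ φ S s` for `s ∈ S`, there are `m = |S|` assortments `A k ⊆ S` and weights
`u k ∈ [0,1]` summing to at most `1` such that each `s ∈ S` is chosen with overall
probability exactly `p s`. -/
theorem probability_matching
    {N : Type*} [Fintype N] [DecidableEq N]
    (φ : Finset N → N → ℝ)
    (hφ0 : ∀ A i, 0 ≤ φ A i) (hφ1 : ∀ A i, φ A i ≤ 1)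
    (hsub : ∀ (A : Finset N) (i : N), i ∈ A → ∀ j ∉ A, φ (insert j A) i ≤ φ A i)
    (S : Finset N) (p : N → ℝ)
    (hp0 : ∀ s ∈ S, 0 ≤ p s) (hp1 : ∀ s ∈ S, p s ≤ φ S s) :
    ∃ (A : Fin S.card → Finset N) (u : Fin S.card → ℝ),
      (∀ k, A k ⊆ S) ∧
      (∀ k, 0 ≤ u k ∧ u k ≤ 1) ∧
      (∑ k, u k ≤ 1) ∧
      (∀ s ∈ S, ∑ k ∈ Finset.univ.filter (fun k => s ∈ A k), u k * φ (A k) s = p s) := by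
  obtain ⟨A, u, hA, hu, hsum, hm⟩ := probability_matching_aux φ hφ0 hsub S.card S p 1 rfl
    zero_le_one hp0 (by simpa using hp1)
  refine ⟨A, u, hA, fun k => ⟨hu k, ?_⟩, hsum, fun s hs => ?_⟩
  · exact (Finset.single_le_sum (fun i _ => hu i) (Finset.mem_univ k)).trans hsum
  · rw [Finset.sum_filter]
    exact hm s hs
end

section
/- For every real s ≥ 0 and all reals x, p ∈ [0, 1], it holds that p·(e^{s·x} − 1) ≤ e^{p·x·(e^{s} − 1)} − 1. -/
/-- **Moment-generating-function bound** (key inequality in Lemma `chernoff2`):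
for all `s ≥ 0` and `x, p ∈ [0,1]`, `p(e^{sx} − 1) ≤ e^{p x (e^s − 1)} − 1`. -/
theorem mgf_bound (s x p : ℝ) (hs : 0 ≤ s)
    (hx0 : 0 ≤ x) (hx1 : x ≤ 1) (hp0 : 0 ≤ p) (hp1 : p ≤ 1) :
    p * (Real.exp (s * x) - 1) ≤ Real.exp (p * x * (Real.exp s - 1)) - 1 := by
  have h := convexOn_exp.2 (Set.mem_univ s) (Set.mem_univ (0 : ℝ)) hx0
    (sub_nonneg.2 hx1) (by ring)
  simp only [smul_eq_mul, mul_zero, add_zero, Real.exp_zero, mul_one] at h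
  rw [mul_comm x s] at h
  have h2 := Real.add_one_le_exp (p * x * (Real.exp s - 1))
  have h3 : p * (Real.exp (s * x) - 1) ≤ p * (x * (Real.exp s - 1)) :=
    mul_le_mul_of_nonneg_left (by linarith) hp0
  linarith
end

section
/- Fix an integer T ≥ 1, real arrival times σ_1 < σ_2 < ⋯ < σ_T, and a nondecreasing function F : ℝ → ℝ with 0 ≤ F(x) ≤ 1 for all x. For probability vectors p, p' ∈ [0,1]^T with p_t ≤ p'_t for every t ∈ {1,…,T}, let η and η' be the availability sequences of the fluid (F, σ, p) and (F, σ, p') processes respectively. Then Σ_{t=1}^{T} p_t · η_t ≤ Σ_{t=1}^{T} p'_t · η'_t. -/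
/-- The availability sequence of the fluid `(F, σ, p)` process (0-based indexing):
`fluidEta F σ p t = 1 − Σ_{τ < t} p τ · fluidEta F σ p τ · (1 − F (σ t − σ τ))`. -/
noncomputable def fluidEta (F : ℝ → ℝ) (σ p : ℕ → ℝ) : ℕ → ℝ
  | t => 1 - ∑ τ ∈ (Finset.range t).attach,
      p τ.1 * fluidEta F σ p τ.1 * (1 - F (σ t - σ τ.1))
  decreasing_by exact Finset.mem_range.mp τ.2

theorem fluidEta_eq (F : ℝ → ℝ) (σ p : ℕ → ℝ) (t : ℕ) :
    fluidEta F σ p t = 1 - ∑ s ∈ Finset.range t,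
      p s * fluidEta F σ p s * (1 - F (σ t - σ s)) := by
  rw [fluidEta]
  rw [Finset.sum_attach (Finset.range t)
    (fun s => p s * fluidEta F σ p s * (1 - F (σ t - σ s)))]

theorem fluidEta_nonneg (T : ℕ) (σ : ℕ → ℝ)
    (hσ : ∀ s t, s < t → t < T → σ s < σ t)
    (F : ℝ → ℝ) (hF : Monotone F) (hF0 : ∀ x, 0 ≤ F x)
    (p : ℕ → ℝ) (hp : ∀ t, t < T → 0 ≤ p t ∧ p t ≤ 1) (t : ℕ) :
    t < T → 0 ≤ fluidEta F σ p t := by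
  induction t using Nat.strong_induction_on with
  | _ t ih =>
    intro ht
    cases t with
    | zero => rw [fluidEta_eq]; simp
    | succ t =>
      have h0 := ih t (by omega) (by omega)
      have hpt := hp t (by omega)
      have e := fluidEta_eq F σ p t
      rw [fluidEta_eq, Finset.sum_range_succ]
      have h1 : ∑ s ∈ Finset.range t, p s * fluidEta F σ p s * (1 - F (σ (t+1) - σ s))
          ≤ ∑ s ∈ Finset.range t, p s * fluidEta F σ p s * (1 - F (σ t - σ s)) := by
        apply Finset.sum_le_sum
        intro s hs
        have hs' := Finset.mem_range.mp hs
        apply mul_le_mul_of_nonneg_left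
        · have := hF (show σ t - σ s ≤ σ (t+1) - σ s by
            have := hσ t (t+1) (by omega) ht
            linarith)
          linarith
        · exact mul_nonneg (hp s (by omega)).1 (ih s (by omega) (by omega))
      have h2 : p t * fluidEta F σ p t * (1 - F (σ (t+1) - σ t)) ≤ fluidEta F σ p t := by
        have a := mul_nonneg hpt.1 h0
        have b := mul_nonneg a (hF0 (σ (t+1) - σ t))
        have c := mul_le_mul_of_nonneg_right hpt.2 h0
        nlinarith
      linarith

/-- Dual weights: availability of the time-reversed process. -/
theorem exists_dual (T : ℕ) (σ : ℕ → ℝ)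
    (hσ : ∀ s t, s < t → t < T → σ s < σ t)
    (F : ℝ → ℝ) (hF : Monotone F) (hF0 : ∀ x, 0 ≤ F x)
    (p : ℕ → ℝ) (hp : ∀ t, t < T → 0 ≤ p t ∧ p t ≤ 1) :
    ∃ w : ℕ → ℝ, ∀ t, t < T → 0 ≤ w t ∧
      w t = 1 - ∑ u ∈ Finset.range T,
        if t < u then p u * w u * (1 - F (σ u - σ t)) else 0 := by
  refine ⟨fun t => fluidEta F (fun i => -σ (T-1-i)) (fun i => p (T-1-i)) (T-1-t), ?_⟩
  intro t ht
  constructor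
  · apply fluidEta_nonneg T _ _ F hF hF0 _ _ _ (by omega)
    · intro a b hab hb
      have := hσ (T-1-b) (T-1-a) (by omega) (by omega)
      simpa using this
    · intro a ha
      exact hp _ (by omega)
  · simp only []
    rw [fluidEta_eq, ← Finset.sum_filter]
    congr 1
    refine Finset.sum_nbij' (fun i => T-1-i) (fun i => T-1-i) ?_ ?_ ?_ ?_ ?_
    · intro a ha
      simp at ha ⊢
      omega
    · intro a ha
      simp at ha ⊢
      omega
    · intro a ha
      simp at ha ⊢
      omega
    · intro a ha
      simp at ha ⊢
      omega
    · intro a ha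
      simp at ha
      have h1 : T-1-(T-1-a) = a := by omega
      have h2 : T-1-(T-1-t) = t := by omega
      simp only [h1, h2]
      congr 3
      ring

/-- **Monotonicity Property** (fluid form of Lemma `monotone`): the total reward
`Σ_t p_t · η_t` of the fluid `(F, σ, p)` process is monotone in the probability
vector `p`. -/
theorem fluid_monotonicity
    (T : ℕ) (hT : 1 ≤ T) (σ : ℕ → ℝ)
    (hσ : ∀ s t, s < t → t < T → σ s < σ t)
    (F : ℝ → ℝ) (hF : Monotone F) (hF0 : ∀ x, 0 ≤ F x) (hF1 : ∀ x, F x ≤ 1)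
    (p p' : ℕ → ℝ)
    (hp : ∀ t, t < T → 0 ≤ p t ∧ p t ≤ 1)
    (hp' : ∀ t, t < T → 0 ≤ p' t ∧ p' t ≤ 1)
    (hle : ∀ t, t < T → p t ≤ p' t) :
    ∑ t ∈ Finset.range T, p t * fluidEta F σ p t ≤
      ∑ t ∈ Finset.range T, p' t * fluidEta F σ p' t := by
  obtain ⟨w, hw⟩ := exists_dual T σ hσ F hF hF0 p' hp'
  have hη := fluidEta_nonneg T σ hσ F hF hF0 p hp
  set η := fluidEta F σ p with hηd
  set η' := fluidEta F σ p' with hηd'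
  have key : ∑ t ∈ Finset.range T, (p' t * η' t - p t * η t)
      = ∑ u ∈ Finset.range T, w u * ((p' u - p u) * η u) := by
    have e1 : ∀ t ∈ Finset.range T, (p' t * η' t - p t * η t) =
        (p' t * η' t - p t * η t) * w t + ∑ u ∈ Finset.range T,
          if t < u then (p' t * η' t - p t * η t) * (p' u * w u * (1 - F (σ u - σ t))) else 0 := by
      intro t ht
      have h := (hw t (Finset.mem_range.mp ht)).2
      simp only [← mul_ite_zero]
      rw [← Finset.mul_sum, ← mul_add]
      have h' : w t + ∑ u ∈ Finset.range T,
        (if t < u then p' u * w u * (1 - F (σ u - σ t)) else 0) = 1 := by linarith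
      simp only [← mul_ite_zero] at h'
      rw [h', mul_one]
    rw [Finset.sum_congr rfl e1, Finset.sum_add_distrib, Finset.sum_comm,
      ← Finset.sum_add_distrib]
    apply Finset.sum_congr rfl
    intro u hu
    have hu' := Finset.mem_range.mp hu
    have e2 : (Finset.range T).filter (fun t => t < u) = Finset.range u := by
      ext a
      simp
      omega
    rw [← Finset.sum_filter, e2]
    have e3 : ∑ t ∈ Finset.range u,
        (p' t * η' t - p t * η t) * (p' u * w u * (1 - F (σ u - σ t)))
        = p' u * w u * (η u - η' u) := by
      have a := fluidEta_eq F σ p u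
      have b := fluidEta_eq F σ p' u
      rw [← hηd] at a
      rw [← hηd'] at b
      rw [a, b, sub_sub_sub_cancel_left, ← Finset.sum_sub_distrib, Finset.mul_sum]
      apply Finset.sum_congr rfl
      intro t _
      ring
    rw [e3]
    ring
  have pos : 0 ≤ ∑ u ∈ Finset.range T, w u * ((p' u - p u) * η u) := by
    apply Finset.sum_nonneg
    intro u hu
    have hu' := Finset.mem_range.mp hu
    exact mul_nonneg (hw u hu').1 (mul_nonneg (sub_nonneg.mpr (hle u hu')) (hη u hu'))
  rw [← key, Finset.sum_sub_distrib] at pos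
  linarith
end

section
/- Fix an integer T ≥ 1, real arrival times σ_1 < σ_2 < ⋯ < σ_T, and a nondecreasing function F : ℝ → ℝ with 0 ≤ F(x) ≤ 1 for all x. Let p ∈ [0,1]^T with availability sequence η of the fluid (F, σ, p) process, and let Z ⊆ {1,…,T} be a set of indices such that η_t = 0 for every t ∈ Z. Define p' by p'_t = 1 for t ∈ Z and p'_t = p_t otherwise, and let η' be the availability sequence of the fluid (F, σ, p') process. Then η'_t = η_t for every t ∈ {1,…,T}, and consequently Σ_{t=1}^{T} p'_t · η'_t = Σ_{t=1}^{T} p_t · η_t. -/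
/-- **Adding Zero Probability Points** (fluid form of Lemma `zeroset`): raising to `1`
the probabilities at arrivals where no fraction of the resource is available changes
neither the availability sequence nor the total reward. -/
theorem fluid_zero_probability_points
    (T : ℕ) (hT : 1 ≤ T) (σ : ℕ → ℝ)
    (hσ : ∀ s t, s < t → t < T → σ s < σ t)
    (F : ℝ → ℝ) (hF : Monotone F) (hF0 : ∀ x, 0 ≤ F x) (hF1 : ∀ x, F x ≤ 1)
    (p : ℕ → ℝ) (hp : ∀ t, t < T → 0 ≤ p t ∧ p t ≤ 1)
    (Z : Finset ℕ) (hZ : ∀ t ∈ Z, t < T)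
    (hzero : ∀ t ∈ Z, fluidEta F σ p t = 0) :
    (∀ t, t < T →
        fluidEta F σ (fun s => if s ∈ Z then 1 else p s) t = fluidEta F σ p t) ∧
    ∑ t ∈ Finset.range T,
        (if t ∈ Z then 1 else p t) * fluidEta F σ (fun s => if s ∈ Z then 1 else p s) t
      = ∑ t ∈ Finset.range T, p t * fluidEta F σ p t := by
  have key : ∀ t, fluidEta F σ (fun s => if s ∈ Z then 1 else p s) t = fluidEta F σ p t := by
    intro t
    induction t using Nat.strong_induction_on with
    | _ t ih =>
      rw [fluidEta, fluidEta]
      congr 1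
      refine Finset.sum_congr rfl fun τ _ => ?_
      rw [ih τ.1 (Finset.mem_range.mp τ.2)]
      by_cases h : τ.1 ∈ Z
      · rw [hzero _ h]; simp
      · simp only [if_neg h]
  refine ⟨fun t _ => key t, Finset.sum_congr rfl fun t _ => ?_⟩
  rw [key t]
  by_cases h : t ∈ Z
  · rw [hzero _ h]; simp
  · rw [if_neg h]
end

section
/- For every integer n ≥ 1, there do not exist nonnegative reals θ₁(t) for t ∈ {1, …, 3n} and θ₂(t) for t ∈ {2n+1, …, 4n} satisfying simultaneously: (a) θ₁(2n) + (1/2)·Σ_{τ=2n+1}^{3n} θ₁(τ) ≥ 1 − 1/e; (b) θ₁(t) + (1/2)·Σ_{τ=t+1}^{3n} θ₁(τ) ≥ e^{−1/2} − e^{−1} for every t ∈ {2n+1, …, 3n}; (c) θ₂(4n) ≥ 1 − 1/e; and (d) Σ_{t=1}^{3n} θ₁(t) + Σ_{t=2n+1}^{4n} θ₂(t) ≤ 3/2 − 3/e + e^{−1/2}. -/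
/-- **Infeasibility of the primal-dual system** (core of Lemma `primalimpossible`):
the linear system arising from the classical primal-dual certificate for Balance on
the fluid two-point reusability instance has no nonnegative solution. -/
theorem primal_dual_infeasible (n : ℕ) (hn : 1 ≤ n) :
    ¬ ∃ (θ₁ θ₂ : ℕ → ℝ),
      (∀ t, 1 ≤ t → t ≤ 3 * n → 0 ≤ θ₁ t) ∧
      (∀ t, 2 * n + 1 ≤ t → t ≤ 4 * n → 0 ≤ θ₂ t) ∧
      (1 - Real.exp (-1) ≤
        θ₁ (2 * n) + (1 / 2) * ∑ τ ∈ Finset.Icc (2 * n + 1) (3 * n), θ₁ τ) ∧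
      (∀ t, 2 * n + 1 ≤ t → t ≤ 3 * n →
        Real.exp (-(1 / 2)) - Real.exp (-1) ≤
          θ₁ t + (1 / 2) * ∑ τ ∈ Finset.Icc (t + 1) (3 * n), θ₁ τ) ∧
      (1 - Real.exp (-1) ≤ θ₂ (4 * n)) ∧
      (∑ t ∈ Finset.Icc 1 (3 * n), θ₁ t + ∑ t ∈ Finset.Icc (2 * n + 1) (4 * n), θ₂ t
        ≤ 3 / 2 - 3 * Real.exp (-1) + Real.exp (-(1 / 2))) := by
  rintro ⟨θ₁, θ₂, h1, h2, ha, -, hc, hd⟩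
  have hS : 0 ≤ ∑ τ ∈ Finset.Icc (2 * n + 1) (3 * n), θ₁ τ :=
    Finset.sum_nonneg fun i hi => by
      rw [Finset.mem_Icc] at hi
      exact h1 i (by omega) hi.2
  have hA : θ₁ (2 * n) + ∑ τ ∈ Finset.Icc (2 * n + 1) (3 * n), θ₁ τ
      ≤ ∑ t ∈ Finset.Icc 1 (3 * n), θ₁ t := by
    rw [← Finset.sum_insert (s := Finset.Icc (2 * n + 1) (3 * n)) (by simp)]
    refine Finset.sum_le_sum_of_subset_of_nonneg ?_ ?_
    · intro x hx
      simp only [Finset.mem_insert, Finset.mem_Icc] at hx ⊢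
      omega
    · intro i hi _
      rw [Finset.mem_Icc] at hi
      exact h1 i hi.1 hi.2
  have hB : θ₂ (4 * n) ≤ ∑ t ∈ Finset.Icc (2 * n + 1) (4 * n), θ₂ t :=
    Finset.single_le_sum (f := θ₂)
      (fun i hi => by
        rw [Finset.mem_Icc] at hi
        exact h2 i hi.1 hi.2)
      (by rw [Finset.mem_Icc]; omega)
  have hx : Real.exp (-1) = Real.exp (-(1 / 2)) * Real.exp (-(1 / 2)) := by
    rw [← Real.exp_add]; norm_num
  nlinarith [sq_nonneg (Real.exp (-(1 / 2)) - 1 / 2)]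
end
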